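/- Occupancy measure difference bound: for any discounted MDP M and any two policies π, π̃ : S → Δ(A): ‖μ^{π̃} − μ^π‖₁ ≤ H · ‖π̃ − π‖_{L¹(μ^π),1}, where ‖π̃ − π‖_{L¹(μ^π),1} := E_{s∼μ^π} ‖π̃_s − π_s‖₁. -/

import Mathlib

open scoped BigOperators Classical

noncomputable section

/-- A discounted MDP with finite state space `S` and finite action set `A`.
`r` is interpreted as a cost in `[0,1]`. -/
structure MDP (S A : Type) [Fintype S] [Fintype A] where
  P : S → A → S → ℝ
  P_nonneg : ∀ s a s', 0 ≤ P s a s'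
  P_sum_one : ∀ s a, ∑ s', P s a s' = 1
  r : S → A → ℝ
  r_nonneg : ∀ s a, 0 ≤ r s a
  r_le_one : ∀ s a, r s a ≤ 1
  gamma : ℝ
  gamma_pos : 0 < gamma
  gamma_lt_one : gamma < 1
  rho0 : S → ℝ
  rho0_nonneg : ∀ s, 0 ≤ rho0 s
  rho0_sum_one : ∑ s, rho0 s = 1

variable {S A : Type} [Fintype S] [Fintype A]

/-- `π` is a policy: a probability distribution over actions at every state. -/
def IsPolicy (π : S → A → ℝ) : Prop :=
  (∀ s a, 0 ≤ π s a) ∧ ∀ s, ∑ a, π s a = 1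

namespace MDP

/-- Effective horizon `H = 1/(1-γ)`. -/
def horizon (M : MDP S A) : ℝ := 1 / (1 - M.gamma)

/-- One-step evolution of a state distribution under policy `π`. -/
def stepDist (M : MDP S A) (π : S → A → ℝ) (d : S → ℝ) : S → ℝ :=
  fun s' => ∑ s, ∑ a, d s * π s a * M.P s a s'

/-- State distribution at time `t` under `π` with start distribution `ρ`. -/
def distAt (M : MDP S A) (π : S → A → ℝ) (ρ : S → ℝ) (t : ℕ) : S → ℝ :=
  (M.stepDist π)^[t] ρ

/-- Expected one-step cost under state distribution `d` and policy `π`. -/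
def expCost (M : MDP S A) (π : S → A → ℝ) (d : S → ℝ) : ℝ :=
  ∑ s, ∑ a, d s * π s a * M.r s a

/-- Discounted value `V_ρ(π) = Σ_t γ^t E[r(s_t,a_t)]` with start-state distribution `ρ`. -/
def valueFrom (M : MDP S A) (π : S → A → ℝ) (ρ : S → ℝ) : ℝ :=
  ∑' t : ℕ, M.gamma ^ t * M.expCost π (M.distAt π ρ t)

/-- Value starting from state `s`. -/
def valueAt (M : MDP S A) (π : S → A → ℝ) (s : S) : ℝ :=
  M.valueFrom π (fun s' => if s' = s then 1 else 0)

/-- Value from the initial state distribution `ρ0`. -/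
def value (M : MDP S A) (π : S → A → ℝ) : ℝ := M.valueFrom π M.rho0

/-- Action-value (Q) function. -/
def Qfun (M : MDP S A) (π : S → A → ℝ) (s : S) (a : A) : ℝ :=
  M.r s a + M.gamma * ∑ s', M.P s a s' * M.valueAt π s'

/-- Discounted state-occupancy measure with start distribution `ρ`. -/
def occFrom (M : MDP S A) (π : S → A → ℝ) (ρ : S → ℝ) (s : S) : ℝ :=
  (1 - M.gamma) * ∑' t : ℕ, M.gamma ^ t * M.distAt π ρ t s

/-- Discounted state-occupancy measure from the initial distribution. -/
def occ (M : MDP S A) (π : S → A → ℝ) : S → ℝ := M.occFrom π M.rho0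

/-- Policy gradient in the direct parametrization:
`(∇V(π))_{s,a} = H μ^π(s) Q^π_{s,a}` (policy gradient theorem). -/
def gradV (M : MDP S A) (π : S → A → ℝ) : S → A → ℝ :=
  fun s a => M.horizon * M.occ π s * M.Qfun π s a

end MDP

/-- Inner product on `ℝ^A`. -/
def innerA (u v : A → ℝ) : ℝ := ∑ a, u a * v a

/-- Inner product on `ℝ^{S×A}`. -/
def innerSA (u v : S → A → ℝ) : ℝ := ∑ s, ∑ a, u s a * v s a

/-- `PC` satisfies `(C, eps)`-variational gradient dominance w.r.t. `M`. -/
def IsVGD (M : MDP S A) (PC : Set (S → A → ℝ)) (C eps : ℝ) : Prop :=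
  ∀ π ∈ PC, M.value π - sInf (M.value '' PC) ≤
    C * sSup ((fun π' => innerSA (M.gradV π) (fun s a => π s a - π' s a)) '' PC) + eps

/-- The ε-greedy exploratory class `Π^ε = {(1-ε)π + ε·u : π ∈ Π}`, `u` uniform. -/
def greedyClass (PC : Set (S → A → ℝ)) (ε : ℝ) : Set (S → A → ℝ) :=
  (fun π => fun s a => (1 - ε) * π s a + ε / (Fintype.card A : ℝ)) '' PC

/-- Weighted norm `‖u‖_{L²(μ),1} = √(E_{s∼μ} ‖u_s‖₁²)`. -/
def wnorm1 (μ : S → ℝ) (u : S → A → ℝ) : ℝ :=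
  Real.sqrt (∑ s, μ s * (∑ a, |u s a|) ^ 2)

/-- Weighted norm `‖u‖_{L²(μ),2} = √(E_{s∼μ} ‖u_s‖₂²)`. -/
def wnorm2 (μ : S → ℝ) (u : S → A → ℝ) : ℝ :=
  Real.sqrt (∑ s, μ s * ∑ a, (u s a) ^ 2)

/-- `N` is a norm on `ℝ^A`. -/
def IsNormA (N : (A → ℝ) → ℝ) : Prop :=
  (∀ x, 0 ≤ N x) ∧ (∀ x, N x = 0 ↔ x = 0) ∧
    (∀ (c : ℝ) (x : A → ℝ), N (c • x) = |c| * N x) ∧ ∀ x y, N (x + y) ≤ N x + N y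

/-- Dual norm of a norm `N` on `ℝ^A`. -/
def dualNormA (N : (A → ℝ) → ℝ) (z : A → ℝ) : ℝ :=
  sSup ((fun u => innerA z u) '' {u | N u ≤ 1})

/-- Weighted norm `‖u‖_{L²(μ),∘} = √(E_{s∼μ} ‖u_s‖∘²)` for an action-space norm `N`. -/
def wnormN (μ : S → ℝ) (N : (A → ℝ) → ℝ) (u : S → A → ℝ) : ℝ :=
  Real.sqrt (∑ s, μ s * (N (u s)) ^ 2)

/-- Bregman divergence on `ℝ^A` of `R` whose gradient is `gR`. -/
def bregA (R : (A → ℝ) → ℝ) (gR : (A → ℝ) → A → ℝ) (u v : A → ℝ) : ℝ :=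
  R u - R v - innerA (gR v) (u - v)

/-- The probability simplex `Δ(B)`. -/
def simplexA (B : Type) [Fintype B] : Set (B → ℝ) :=
  {p | (∀ b, 0 ≤ p b) ∧ ∑ b, p b = 1}

/-!
One step `d ↦ M.stepDist π d` of the state chain is bilinear in `(π, d)`, and its `ℓ¹` norm is at
most `∑ s, |d s| * ‖π s‖₁` because the transition kernel preserves mass. The occupancy measure
solves the flow equation `μ = (1 - γ) ρ + γ * M.stepDist π μ`. Subtracting the flow equations of
`πt` and `π` gives `μt - μ = γ * (M.stepDist πt (μt - μ) + M.stepDist (πt - π) μ)`, so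
`‖μt - μ‖₁ ≤ γ * (‖μt - μ‖₁ + 𝔼_μ ‖πt - π‖₁)`, and solving for `‖μt - μ‖₁` yields the factor
`γ / (1 - γ) ≤ H`.
-/

lemma IsPolicy.sum_abs_eq_one {T : Type} {π : T → A → ℝ} (hπ : IsPolicy π) (s : T) :
    ∑ a, |π s a| = 1 := by
  simpa only [abs_of_nonneg (hπ.1 s _)] using hπ.2 s

namespace MDP

variable (M : MDP S A) {π πt : S → A → ℝ} {d ρ : S → ℝ}

lemma one_sub_gamma_pos : 0 < 1 - M.gamma :=
  sub_pos.2 M.gamma_lt_one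

lemma gamma_mul_horizon_le_horizon : M.gamma * M.horizon ≤ M.horizon :=
  mul_le_of_le_one_left (one_div_nonneg.2 M.one_sub_gamma_pos.le) M.gamma_lt_one.le

lemma stepDist_nonneg (hπ : ∀ s a, 0 ≤ π s a) (hd : ∀ s, 0 ≤ d s) (s' : S) :
    0 ≤ M.stepDist π d s' :=
  Finset.sum_nonneg fun s _ => Finset.sum_nonneg fun a _ =>
    mul_nonneg (mul_nonneg (hd s) (hπ s a)) (M.P_nonneg s a s')

lemma stepDist_const_mul (π : S → A → ℝ) (c : ℝ) (d : S → ℝ) (s' : S) :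
    M.stepDist π (fun s => c * d s) s' = c * M.stepDist π d s' := by
  simp only [stepDist, Finset.mul_sum, mul_assoc]

lemma stepDist_sub_stepDist (π πt : S → A → ℝ) (d dt : S → ℝ) (s' : S) :
    M.stepDist πt dt s' - M.stepDist π d s' =
      M.stepDist πt (dt - d) s' + M.stepDist (πt - π) d s' := by
  simp only [stepDist, Pi.sub_apply, ← Finset.sum_sub_distrib, ← Finset.sum_add_distrib]
  refine Finset.sum_congr rfl fun s _ => Finset.sum_congr rfl fun a _ => ?_
  ring

lemma hasSum_stepDist {ι : Type*} (π : S → A → ℝ) {f : ι → S → ℝ}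
    (hf : ∀ s, HasSum (fun i => f i s) (d s)) (s' : S) :
    HasSum (fun i => M.stepDist π (f i) s') (M.stepDist π d s') :=
  hasSum_sum fun s _ => hasSum_sum fun a _ => ((hf s).mul_right (π s a)).mul_right (M.P s a s')

lemma sum_abs_stepDist_le (π : S → A → ℝ) (d : S → ℝ) :
    ∑ s', |M.stepDist π d s'| ≤ ∑ s, |d s| * ∑ a, |π s a| := by
  have abs_stepDist_le (s' : S) :
      |M.stepDist π d s'| ≤ ∑ s, ∑ a, |d s| * |π s a| * M.P s a s' := by
    refine (Finset.abs_sum_le_sum_abs _ _).trans (Finset.sum_le_sum fun s _ => ?_)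
    refine (Finset.abs_sum_le_sum_abs _ _).trans_eq (Finset.sum_congr rfl fun a _ => ?_)
    rw [abs_mul, abs_mul, abs_of_nonneg (M.P_nonneg s a s')]
  calc ∑ s', |M.stepDist π d s'|
      ≤ ∑ s', ∑ s, ∑ a, |d s| * |π s a| * M.P s a s' :=
        Finset.sum_le_sum fun s' _ => abs_stepDist_le s'
    _ = ∑ s, ∑ a, ∑ s', |d s| * |π s a| * M.P s a s' := by
        rw [Finset.sum_comm]
        exact Finset.sum_congr rfl fun s _ => Finset.sum_comm
    _ = ∑ s, |d s| * ∑ a, |π s a| := by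
        simp only [← Finset.mul_sum, M.P_sum_one, mul_one]

lemma sum_abs_stepDist_le_sum_abs (hπ : ∀ s, ∑ a, |π s a| ≤ 1) (d : S → ℝ) :
    ∑ s', |M.stepDist π d s'| ≤ ∑ s, |d s| :=
  (M.sum_abs_stepDist_le π d).trans <|
    Finset.sum_le_sum fun s _ => mul_le_of_le_one_right (abs_nonneg _) (hπ s)

lemma distAt_succ (π : S → A → ℝ) (ρ : S → ℝ) (t : ℕ) :
    M.distAt π ρ (t + 1) = M.stepDist π (M.distAt π ρ t) :=
  Function.iterate_succ_apply' _ _ _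

lemma distAt_nonneg (hπ : ∀ s a, 0 ≤ π s a) (hρ : ∀ s, 0 ≤ ρ s) (t : ℕ) (s : S) :
    0 ≤ M.distAt π ρ t s := by
  induction t generalizing s with
  | zero => exact hρ s
  | succ t ih =>
    rw [distAt_succ]
    exact M.stepDist_nonneg hπ ih s

lemma sum_abs_distAt_le (hπ : ∀ s, ∑ a, |π s a| ≤ 1) (ρ : S → ℝ) (t : ℕ) :
    ∑ s, |M.distAt π ρ t s| ≤ ∑ s, |ρ s| := by
  induction t with
  | zero => exact le_rfl
  | succ t ih =>
    rw [distAt_succ]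
    exact (M.sum_abs_stepDist_le_sum_abs hπ _).trans ih

lemma summable_gamma_pow_mul_distAt (hπ : ∀ s, ∑ a, |π s a| ≤ 1) (ρ : S → ℝ) (s : S) :
    Summable fun t : ℕ => M.gamma ^ t * M.distAt π ρ t s := by
  have abs_distAt_le (t : ℕ) : |M.distAt π ρ t s| ≤ ∑ s, |ρ s| :=
    (Finset.single_le_sum (f := fun s => |M.distAt π ρ t s|) (fun _ _ => abs_nonneg _)
      (Finset.mem_univ s)).trans (M.sum_abs_distAt_le hπ ρ t)
  have geometric : Summable fun t : ℕ => M.gamma ^ t * ∑ s, |ρ s| :=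
    (summable_geometric_of_lt_one M.gamma_pos.le M.gamma_lt_one).mul_right _
  refine geometric.of_norm_bounded fun t => ?_
  rw [Real.norm_eq_abs, abs_mul, abs_of_nonneg (pow_nonneg M.gamma_pos.le t)]
  exact mul_le_mul_of_nonneg_left (abs_distAt_le t) (pow_nonneg M.gamma_pos.le t)

lemma occFrom_nonneg (hπ : ∀ s a, 0 ≤ π s a) (hρ : ∀ s, 0 ≤ ρ s) (s : S) :
    0 ≤ M.occFrom π ρ s :=
  mul_nonneg M.one_sub_gamma_pos.le <| tsum_nonneg fun t =>
    mul_nonneg (pow_nonneg M.gamma_pos.le t) (M.distAt_nonneg hπ hρ t s)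

lemma occFrom_eq_add_stepDist_occFrom (hπ : ∀ s, ∑ a, |π s a| ≤ 1) (ρ : S → ℝ) (s' : S) :
    M.occFrom π ρ s' =
      (1 - M.gamma) * ρ s' + M.gamma * M.stepDist π (M.occFrom π ρ) s' := by
  have summable_dist := M.summable_gamma_pow_mul_distAt hπ ρ
  have tsum_succ : ∑' t : ℕ, M.gamma ^ (t + 1) * M.distAt π ρ (t + 1) s' =
      M.gamma * M.stepDist π (fun s => ∑' t : ℕ, M.gamma ^ t * M.distAt π ρ t s) s' := by
    rw [← (M.hasSum_stepDist π (fun s => (summable_dist s).hasSum) s').tsum_eq, ← tsum_mul_left]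
    simp only [stepDist_const_mul, distAt_succ, pow_succ', mul_assoc]
  have stepDist_occFrom : M.stepDist π (M.occFrom π ρ) s' = (1 - M.gamma) *
      M.stepDist π (fun s => ∑' t : ℕ, M.gamma ^ t * M.distAt π ρ t s) s' :=
    M.stepDist_const_mul π _ _ s'
  calc M.occFrom π ρ s'
      = (1 - M.gamma) *
          (ρ s' + ∑' t : ℕ, M.gamma ^ (t + 1) * M.distAt π ρ (t + 1) s') := by
        rw [occFrom, (summable_dist s').tsum_eq_zero_add, pow_zero, one_mul]
        rfl
    _ = (1 - M.gamma) * ρ s' + M.gamma * M.stepDist π (M.occFrom π ρ) s' := by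
        rw [tsum_succ, stepDist_occFrom]
        ring

lemma occFrom_sub_occFrom (hπ : ∀ s, ∑ a, |π s a| ≤ 1) (hπt : ∀ s, ∑ a, |πt s a| ≤ 1)
    (ρ : S → ℝ) (s' : S) :
    M.occFrom πt ρ s' - M.occFrom π ρ s' =
      M.gamma * (M.stepDist πt (M.occFrom πt ρ - M.occFrom π ρ) s' +
        M.stepDist (πt - π) (M.occFrom π ρ) s') := by
  rw [← stepDist_sub_stepDist, M.occFrom_eq_add_stepDist_occFrom hπt,
    M.occFrom_eq_add_stepDist_occFrom hπ, add_sub_add_left_eq_sub, mul_sub]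

lemma sum_abs_occFrom_sub_le_gamma_mul_add (hπ : ∀ s, ∑ a, |π s a| ≤ 1)
    (hπt : ∀ s, ∑ a, |πt s a| ≤ 1) (ρ : S → ℝ) :
    ∑ s, |M.occFrom πt ρ s - M.occFrom π ρ s| ≤
      M.gamma * (∑ s, |M.occFrom πt ρ s - M.occFrom π ρ s| +
        ∑ s, |M.occFrom π ρ s| * ∑ a, |πt s a - π s a|) := by
  calc ∑ s, |M.occFrom πt ρ s - M.occFrom π ρ s|
      = M.gamma * ∑ s, |M.stepDist πt (M.occFrom πt ρ - M.occFrom π ρ) s +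
          M.stepDist (πt - π) (M.occFrom π ρ) s| := by
        simp only [Finset.mul_sum, M.occFrom_sub_occFrom hπ hπt, abs_mul,
          abs_of_pos M.gamma_pos]
    _ ≤ M.gamma * (∑ s, |M.stepDist πt (M.occFrom πt ρ - M.occFrom π ρ) s| +
          ∑ s, |M.stepDist (πt - π) (M.occFrom π ρ) s|) := by
        rw [← Finset.sum_add_distrib]
        exact mul_le_mul_of_nonneg_left (Finset.sum_le_sum fun s _ => abs_add_le _ _)
          M.gamma_pos.le
    _ ≤ _ := mul_le_mul_of_nonneg_left
        (add_le_add (M.sum_abs_stepDist_le_sum_abs hπt _) (M.sum_abs_stepDist_le _ _))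
        M.gamma_pos.le

lemma sum_abs_occFrom_sub_le_gamma_mul_horizon_mul (hπ : ∀ s, ∑ a, |π s a| ≤ 1)
    (hπt : ∀ s, ∑ a, |πt s a| ≤ 1) (ρ : S → ℝ) :
    ∑ s, |M.occFrom πt ρ s - M.occFrom π ρ s| ≤
      M.gamma * M.horizon * ∑ s, |M.occFrom π ρ s| * ∑ a, |πt s a - π s a| := by
  have self_bound := M.sum_abs_occFrom_sub_le_gamma_mul_add hπ hπt ρ
  rw [horizon, mul_one_div, div_mul_eq_mul_div, le_div_iff₀ M.one_sub_gamma_pos]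
  linarith

end MDP

theorem occupancy_difference_bound_general (M : MDP S A) {π πt : S → A → ℝ}
    (hπ : ∀ s, ∑ a, |π s a| ≤ 1) (hπt : ∀ s, ∑ a, |πt s a| ≤ 1) (ρ : S → ℝ) :
    ∑ s, |M.occFrom πt ρ s - M.occFrom π ρ s| ≤
      M.horizon * ∑ s, |M.occFrom π ρ s| * ∑ a, |πt s a - π s a| :=
  (M.sum_abs_occFrom_sub_le_gamma_mul_horizon_mul hπ hπt ρ).trans <|
    mul_le_mul_of_nonneg_right M.gamma_mul_horizon_le_horizon (by positivity)

/-- Lemma: occupancy measure difference bound. -/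
theorem occupancy_difference_bound (M : MDP S A) (π πt : S → A → ℝ)
    (hπ : IsPolicy π) (hπt : IsPolicy πt) :
    ∑ s, |M.occ πt s - M.occ π s| ≤
      M.horizon * ∑ s, M.occ π s * ∑ a, |πt s a - π s a| := by
  simpa only [MDP.occ, abs_of_nonneg (M.occFrom_nonneg hπ.1 M.rho0_nonneg _)] using
    occupancy_difference_bound_general M (fun s => (hπ.sum_abs_eq_one s).le)
      (fun s => (hπt.sum_abs_eq_one s).le) M.rho0
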